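/- Let G be a graph with X the projective toric subset it parameterizes, and let H_1, H_2 be subgraphs of G (each with no isolated vertices) such that E_G = E_{H_1} ∪ E_{H_2} and E_{H_1} ∩ E_{H_2} ≠ ∅. Let X_1 and X_2 be the projective toric subsets parameterized by H_1 and H_2, respectively. Then reg(G) ≤ reg(H_1) + reg(H_2). -/

import Mathlib

open MvPolynomial

/-- A finite multigraph without loops: each edge `e` has two distinct endpoints
`fst e` and `snd e`.  Multiple edges with the same endpoints are allowed. -/
structure Multigraph (V E : Type) : Type where
  fst : E → V
  snd : E → V
  ne : ∀ e, fst e ≠ snd e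

namespace Multigraph

variable {V E : Type}

/-- Vertex `v` is an endpoint of the edge `e`. -/
def Incident (G : Multigraph V E) (v : V) (e : E) : Prop :=
  G.fst e = v ∨ G.snd e = v

instance (G : Multigraph V E) [DecidableEq V] (v : V) : DecidablePred (G.Incident v) :=
  fun e => inferInstanceAs (Decidable (G.fst e = v ∨ G.snd e = v))

/-- The degree of a vertex: the number of edges incident to it. -/
noncomputable def degree (G : Multigraph V E) (v : V) : ℕ :=
  Nat.card {e : E // G.Incident v e}

/-- The graph has no isolated vertices. -/
def NoIsolated (G : Multigraph V E) : Prop :=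
  ∀ v : V, ∃ e : E, G.Incident v e

variable (K : Type) [Field K] [Fintype K]

/-- The point of the affine torus associated with an assignment `x` of nonzero
scalars to the vertices: its coordinate at an edge `e = {v,w}` is `x v * x w`. -/
def point (G : Multigraph V E) (x : V → Kˣ) : E → K :=
  fun e => (x (G.fst e) : K) * (x (G.snd e) : K)

/-- The projective toric subset `X` parameterized by `G`, realized as the set of
`Kˣ`-orbits (i.e. projective points) of the points `G.point K x`, `x : V → Kˣ`. -/
def toricSet (G : Multigraph V E) : Set (Set (E → K)) :=
  Set.range fun x : V → Kˣ => MulAction.orbit Kˣ (G.point K x)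

/-- The vanishing ideal `I(X)` of the projective toric subset parameterized by `G`:
the ideal of all polynomials each of whose homogeneous components vanishes at the
point `G.point K x` for every `x : V → Kˣ`. -/
def vanishingIdeal (G : Multigraph V E) : Ideal (MvPolynomial E K) where
  carrier := {f | ∀ (x : V → Kˣ) (d : ℕ), eval (G.point K x) (homogeneousComponent d f) = 0}
  zero_mem' := by intro x d; simp
  add_mem' := by
    intro a b ha hb x d
    rw [map_add, map_add, ha x d, hb x d, add_zero]
  smul_mem' := by
    intro c f hf x n
    rw [smul_eq_mul, ← sum_homogeneousComponent f, Finset.mul_sum, map_sum, map_sum]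
    refine Finset.sum_eq_zero fun d _ => ?_
    nth_rewrite 1 [← sum_homogeneousComponent c]
    rw [Finset.sum_mul, map_sum, map_sum]
    refine Finset.sum_eq_zero fun e _ => ?_
    have h1 : (homogeneousComponent e c * homogeneousComponent d f).IsHomogeneous (e + d) :=
      (homogeneousComponent_isHomogeneous e c).mul (homogeneousComponent_isHomogeneous d f)
    rw [homogeneousComponent_of_mem ((mem_homogeneousSubmodule _ _).mpr h1)]
    split_ifs
    · rw [map_mul, hf x d, mul_zero]
    · simp

/-- The Hilbert function of `S/I(X)`: the dimension over `K` of the degree-`d`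
homogeneous component of the quotient, realized as the image of the space of
degree-`d` homogeneous polynomials in the quotient. -/
noncomputable def hilbert (G : Multigraph V E) (d : ℕ) : ℕ :=
  Module.finrank K
    ((homogeneousSubmodule E K d).map (Ideal.Quotient.mkₐ K (G.vanishingIdeal K)).toLinearMap)

/-- The regularity `reg G`: the least `d` such that the Hilbert function of `S/I(X)`
at `d` equals the number of points of `X`. -/
noncomputable def reg (G : Multigraph V E) : ℕ :=
  sInf {d : ℕ | G.hilbert K d = (G.toricSet K).ncard}

/-- The graph obtained from `G` by deleting a vertex `v` and all edges incident
to it. -/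
def deleteVert (G : Multigraph V E) (v : V) :
    Multigraph {w : V // w ≠ v} {e : E // ¬ G.Incident v e} where
  fst e := ⟨G.fst e.1, fun h => e.2 (Or.inl h)⟩
  snd e := ⟨G.snd e.1, fun h => e.2 (Or.inr h)⟩
  ne e h := G.ne e.1 (congrArg Subtype.val h)

/-- The graph obtained from `G` by identifying the vertex `v₂` with the vertex `v₁`:
the edges are the same, and every endpoint equal to `v₂` is replaced by `v₁`.
This requires that `{v₁, v₂}` is a non-edge of `G`, so that no loops are created. -/
def identifyVert [DecidableEq V] (G : Multigraph V E) (v₁ v₂ : V) (h12 : v₁ ≠ v₂)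
    (h : ∀ e, ¬ (G.Incident v₁ e ∧ G.Incident v₂ e)) :
    Multigraph {w : V // w ≠ v₂} E where
  fst e := ⟨if G.fst e = v₂ then v₁ else G.fst e, by split_ifs with hh; exacts [h12, hh]⟩
  snd e := ⟨if G.snd e = v₂ then v₁ else G.snd e, by split_ifs with hh; exacts [h12, hh]⟩
  ne := by
    intro e heq
    rw [Subtype.ext_iff] at heq
    simp only at heq
    split_ifs at heq with h1 h2 h2
    · exact G.ne e (h1.trans h2.symm)
    · exact h e ⟨Or.inr heq.symm, Or.inl h1⟩
    · exact h e ⟨Or.inl heq, Or.inr h2⟩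
    · exact G.ne e heq

/-- The subgraph of `G` determined by a set `A` of edges of `G`, together with all
endpoints of those edges (so it has no isolated vertices). -/
def subgraph [DecidableEq V] (G : Multigraph V E) (A : Finset E) :
    Multigraph {v : V // ∃ e ∈ A, G.Incident v e} {e : E // e ∈ A} where
  fst e := ⟨G.fst e.1, e.1, e.2, Or.inl rfl⟩
  snd e := ⟨G.snd e.1, e.1, e.2, Or.inr rfl⟩
  ne e h := G.ne e.1 (congrArg Subtype.val h)

end Multigraph

/-- The vertex of the parallel composition of paths of lengths `k i` lying on the
`i`-th path at distance `j` from the common initial vertex:  `j = 0` gives the common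
initial vertex, `j = k i` the common terminal vertex, and `0 < j < k i` gives the
`j`-th interior vertex of the `i`-th path. -/
def pcVert {ι : Type} (k : ι → ℕ) (i : ι) (j : ℕ) :
    Bool ⊕ ((i : ι) × Fin (k i - 1)) :=
  if h0 : j = 0 then Sum.inl false
  else if h : j < k i then Sum.inr ⟨i, ⟨j - 1, by omega⟩⟩
  else Sum.inl true

/-- The parallel composition of the family of paths `P i` of lengths `k i` (`i : ι`):
the `i`-th path has `k i` edges indexed by `Fin (k i)`, its `j`-th edge joining the
vertices of the `i`-th path at distances `j` and `j + 1` from the common initial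
vertex.  All the initial vertices of the paths are identified to a single vertex and
all the terminal vertices are identified to a single vertex. -/
def parallelComp {ι : Type} (k : ι → ℕ) :
    Multigraph (Bool ⊕ ((i : ι) × Fin (k i - 1))) ((i : ι) × Fin (k i)) where
  fst e := pcVert k e.1 e.2.1
  snd e := pcVert k e.1 (e.2.1 + 1)
  ne := by
    rintro ⟨i, j⟩ h
    have hj := j.2
    simp only [pcVert] at h
    split_ifs at h <;> simp_all <;> omega

/-- The monomial `f i`: the product of the edges of the `i`-th path of the parallel
composition in odd positions (positions `1, 3, 5, ...`, i.e. indices `0, 2, 4, ...`). -/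
noncomputable def oddProd {ι : Type} (K : Type) [Field K] (k : ι → ℕ) (i : ι) :
    MvPolynomial ((i : ι) × Fin (k i)) K :=
  ∏ m : Fin ((k i + 1) / 2), X ⟨i, ⟨2 * m.1, by have := m.2; omega⟩⟩

/-- The monomial `g i`: the product of the edges of the `i`-th path of the parallel
composition in even positions (positions `2, 4, 6, ...`, i.e. indices `1, 3, 5, ...`). -/
noncomputable def evenProd {ι : Type} (K : Type) [Field K] (k : ι → ℕ) (i : ι) :
    MvPolynomial ((i : ι) × Fin (k i)) K :=
  ∏ m : Fin (k i / 2), X ⟨i, ⟨2 * m.1 + 1, by have := m.2; omega⟩⟩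

namespace Multigraph

variable {V E : Type} (K : Type) [Field K] [Fintype K]

/-- Evaluation of a homogeneous polynomial at a scaled point. -/
lemma eval_smul_of_hom {σ : Type} {d : ℕ} {f : MvPolynomial σ K} (hf : f.IsHomogeneous d)
    (c : K) (p : σ → K) : eval (c • p) f = c ^ d * eval p f := by
  rw [eval_eq, eval_eq, Finset.mul_sum]
  refine Finset.sum_congr rfl fun m hm => ?_
  have h := hf (mem_support_iff.mp hm)
  have h2 : ∑ i ∈ m.support, m i = d := by
    rw [← h, Finsupp.weight_apply, Finsupp.sum]
    simp
  simp only [Pi.smul_apply, smul_eq_mul, mul_pow, Finset.prod_mul_distrib]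
  rw [Finset.prod_pow_eq_pow_sum, h2]
  ring

/-- Forms of degree `d` separate the points of the toric set. -/
def Separates (G : Multigraph V E) (d : ℕ) : Prop :=
  ∀ x : V → Kˣ, ∃ f : MvPolynomial E K, f.IsHomogeneous d ∧ eval (G.point K x) f ≠ 0 ∧
    ∀ y : V → Kˣ, MulAction.orbit Kˣ (G.point K y) ≠ MulAction.orbit Kˣ (G.point K x) →
      eval (G.point K y) f = 0

lemma eval_zero_iff_of_orbit (G : Multigraph V E) {d : ℕ} {f : MvPolynomial E K}
    (hf : f.IsHomogeneous d) {x y : V → Kˣ}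
    (h : MulAction.orbit Kˣ (G.point K y) = MulAction.orbit Kˣ (G.point K x)) :
    eval (G.point K y) f = 0 ↔ eval (G.point K x) f = 0 := by
  rw [MulAction.orbit_eq_iff] at h
  obtain ⟨c, hc⟩ := h
  have hc' : (c : K) • G.point K x = G.point K y := hc
  rw [← hc', eval_smul_of_hom K hf]
  simp

/-- A chosen representative of a point of the toric set. -/
noncomputable def rep (G : Multigraph V E) (p : G.toricSet K) : V → Kˣ := p.2.choose

lemma rep_spec (G : Multigraph V E) (p : G.toricSet K) :
    MulAction.orbit Kˣ (G.point K (G.rep K p)) = p.1 := p.2.choose_spec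

/-- Evaluation at representatives. -/
noncomputable def evMap (G : Multigraph V E) (d : ℕ) :
    homogeneousSubmodule E K d →ₗ[K] (G.toricSet K → K) :=
  (LinearMap.pi fun p => (aeval (R := K) (G.point K (G.rep K p))).toLinearMap).comp
    (homogeneousSubmodule E K d).subtype

lemma evMap_apply (G : Multigraph V E) (d : ℕ) (f : homogeneousSubmodule E K d)
    (p : G.toricSet K) : G.evMap K d f p = eval (G.point K (G.rep K p)) f.1 := by
  simp [evMap, aeval_eq_eval]

lemma hilbert_eq (G : Multigraph V E) (d : ℕ) :
    G.hilbert K d = Module.finrank K (LinearMap.range (G.evMap K d)) := by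
  set φ : homogeneousSubmodule E K d →ₗ[K] _ :=
    (Ideal.Quotient.mkₐ K (G.vanishingIdeal K)).toLinearMap.comp
      (homogeneousSubmodule E K d).subtype with hφ
  have hr : LinearMap.range φ = (homogeneousSubmodule E K d).map
      (Ideal.Quotient.mkₐ K (G.vanishingIdeal K)).toLinearMap := by
    rw [hφ, LinearMap.range_comp, Submodule.range_subtype]
  have hk : LinearMap.ker φ = LinearMap.ker (G.evMap K d) := by
    ext f
    have hf : f.1.IsHomogeneous d := f.2
    have h1 : f ∈ LinearMap.ker φ ↔ f.1 ∈ G.vanishingIdeal K := by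
      rw [LinearMap.mem_ker, ← Ideal.Quotient.eq_zero_iff_mem]
      rfl
    rw [h1, LinearMap.mem_ker]
    constructor
    · intro h
      funext p
      rw [evMap_apply]
      have := h (G.rep K p) d
      rw [homogeneousComponent_of_mem f.2] at this
      simpa using this
    · intro h x n
      rw [homogeneousComponent_of_mem f.2]
      split_ifs
      · have h2 := congrFun h ⟨_, x, rfl⟩
        rw [evMap_apply] at h2
        exact (eval_zero_iff_of_orbit K G hf (rep_spec K G ⟨_, x, rfl⟩)).mp h2
      · simp
  rw [hilbert, ← hr, ← φ.quotKerEquivRange.finrank_eq,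
    ← (G.evMap K d).quotKerEquivRange.finrank_eq, hk]

lemma hilbert_iff [Finite V] (G : Multigraph V E) (d : ℕ) :
    G.hilbert K d = (G.toricSet K).ncard ↔ G.Separates K d := by
  classical
  have hfin : (G.toricSet K).Finite := Set.finite_range _
  have := hfin.fintype
  have hcard : (G.toricSet K).ncard = Module.finrank K (G.toricSet K → K) := by
    rw [Module.finrank_fintype_fun_eq_card, Set.ncard_eq_toFinset_card', Set.toFinset_card]
  have h1 : G.hilbert K d = (G.toricSet K).ncard ↔ Function.Surjective (G.evMap K d) := by
    rw [hilbert_eq, hcard, ← LinearMap.range_eq_top]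
    constructor
    · exact Submodule.eq_top_of_finrank_eq
    · intro h; rw [h, finrank_top]
  rw [h1]
  constructor
  · intro h x
    let p : G.toricSet K := ⟨_, x, rfl⟩
    obtain ⟨f, hf⟩ := h (Pi.single p 1)
    have hh : f.1.IsHomogeneous d := f.2
    refine ⟨f.1, hh, ?_, ?_⟩
    · have h2 := congrFun hf p
      rw [evMap_apply, Pi.single_eq_same] at h2
      rw [Ne, ← eval_zero_iff_of_orbit K G hh (rep_spec K G p), h2]
      exact one_ne_zero
    · intro y hy
      let r : G.toricSet K := ⟨_, y, rfl⟩
      have hrp : r ≠ p := fun h => hy (congrArg Subtype.val h)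
      have h2 := congrFun hf r
      rw [evMap_apply, Pi.single_eq_of_ne hrp] at h2
      exact (eval_zero_iff_of_orbit K G hh (rep_spec K G r)).mp h2
  · intro h
    rw [← LinearMap.range_eq_top, eq_top_iff, ← (Pi.basisFun K (G.toricSet K)).span_eq,
      Submodule.span_le]
    rintro _ ⟨p, rfl⟩
    obtain ⟨f, hf, hne, hz⟩ := h (G.rep K p)
    refine ⟨(eval (G.point K (G.rep K p)) f)⁻¹ • ⟨f, hf⟩, ?_⟩
    funext r
    rw [map_smul, Pi.smul_apply, evMap_apply, Pi.basisFun_apply]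
    by_cases hr : r = p
    · subst hr
      simp [hne]
    · have h0 : eval (G.point K (G.rep K r)) f = 0 := by
        apply hz
        rw [rep_spec, rep_spec]
        exact fun h => hr (Subtype.ext h)
      rw [Pi.single_eq_of_ne hr]
      simp [h0]

lemma point_ne_zero (G : Multigraph V E) (x : V → Kˣ) (e : E) : G.point K x e ≠ 0 := by
  simp [point]

lemma exists_separates [Finite V] (G : Multigraph V E) : ∃ d, G.Separates K d := by
  classical
  have hfin : (G.toricSet K).Finite := Set.finite_range _
  have := hfin.fintype
  refine ⟨Fintype.card (G.toricSet K) - 1, fun x => ?_⟩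
  let p : G.toricSet K := ⟨_, x, rfl⟩
  have key : ∀ r : G.toricSet K, r ≠ p → ∃ l : MvPolynomial E K, l.IsHomogeneous 1 ∧
      eval (G.point K x) l ≠ 0 ∧ eval (G.point K (G.rep K r)) l = 0 := by
    intro r hr
    by_contra hcon
    have hall : ∀ e e' : E, G.point K (G.rep K r) e' * G.point K x e =
        G.point K (G.rep K r) e * G.point K x e' := by
      intro e e'
      by_contra hne
      refine hcon ⟨C (G.point K (G.rep K r) e') * X e - C (G.point K (G.rep K r) e) * X e',
        ?_, ?_, ?_⟩
      · exact (isHomogeneous_C_mul_X _ _).sub (isHomogeneous_C_mul_X _ _)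
      · simpa [sub_eq_zero] using hne
      · simp [mul_comm]
    apply hr
    apply Subtype.ext
    rw [← rep_spec K G r]
    change _ = MulAction.orbit Kˣ (G.point K x)
    rw [MulAction.orbit_eq_iff]
    rcases isEmpty_or_nonempty E with hE | ⟨⟨e0⟩⟩
    · exact ⟨1, Subsingleton.elim _ _⟩
    · refine ⟨Units.mk0 (G.point K (G.rep K r) e0 / G.point K x e0)
        (div_ne_zero (point_ne_zero K G _ _) (point_ne_zero K G _ _)), ?_⟩
      funext e
      change (G.point K (G.rep K r) e0 / G.point K x e0) * G.point K x e = _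
      have h0 := point_ne_zero K G x e0
      rw [div_mul_eq_mul_div, div_eq_iff h0]
      exact hall e e0
  choose! l hl1 hl2 hl3 using key
  refine ⟨∏ r ∈ Finset.univ.erase p, l r, ?_, ?_, ?_⟩
  · have := IsHomogeneous.prod (Finset.univ.erase p) l (fun _ => 1)
      (fun r hr => hl1 r (Finset.ne_of_mem_erase hr))
    simpa [Finset.card_erase_of_mem] using this
  · rw [map_prod, Finset.prod_ne_zero_iff]
    exact fun r hr => hl2 r (Finset.ne_of_mem_erase hr)
  · intro y hy
    let r : G.toricSet K := ⟨_, y, rfl⟩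
    have hrp : r ≠ p := fun h => hy (congrArg Subtype.val h)
    rw [map_prod]
    refine Finset.prod_eq_zero (Finset.mem_erase.mpr ⟨hrp, Finset.mem_univ r⟩) ?_
    exact (eval_zero_iff_of_orbit K G (hl1 r hrp) (rep_spec K G r)).mp (hl3 r hrp)

lemma separates_reg [Finite V] (G : Multigraph V E) : G.Separates K (G.reg K) := by
  obtain ⟨d, hd⟩ := exists_separates K G
  rw [← hilbert_iff]
  exact Nat.sInf_mem (s := {d : ℕ | G.hilbert K d = (G.toricSet K).ncard})
    ⟨d, (hilbert_iff K G d).mpr hd⟩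

/-- Restriction to a subgraph of a separating form, seen in the ambient ring. -/
lemma subgraph_form [DecidableEq V] (G : Multigraph V E) (A : Finset E) {d : ℕ}
    (h : (G.subgraph A).Separates K d) (x : V → Kˣ) :
    ∃ f : MvPolynomial E K, f.IsHomogeneous d ∧ eval (G.point K x) f ≠ 0 ∧
      ∀ y : V → Kˣ, eval (G.point K y) f ≠ 0 →
        ∃ c : Kˣ, ∀ e ∈ A, (c : K) * G.point K x e = G.point K y e := by
  obtain ⟨f, hf, hne, hz⟩ := h (fun v => x v.1)
  have hp : ∀ y : V → Kˣ, eval (G.point K y) (rename Subtype.val f) =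
      eval ((G.subgraph A).point K (fun v => y v.1)) f := by
    intro y
    rw [eval_rename]
    rfl
  refine ⟨rename Subtype.val f, hf.rename_isHomogeneous, ?_, ?_⟩
  · rw [hp]; exact hne
  · intro y hy
    rw [hp] at hy
    have h1 := not_imp_comm.mp (hz (fun v => y v.1)) hy
    rw [MulAction.orbit_eq_iff] at h1
    obtain ⟨c, hc⟩ := h1
    exact ⟨c, fun e he => congrFun hc ⟨e, he⟩⟩

end Multigraph

/-- **Proposition 2.7.**  Let `H₁, H₂` be subgraphs of `G` with
`E_G = E_{H₁} ∪ E_{H₂}` and `E_{H₁} ∩ E_{H₂} ≠ ∅`.  Then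
`reg G ≤ reg H₁ + reg H₂`. -/
theorem reg_le_of_cover
    {V E : Type} [Fintype V] [DecidableEq V] [Fintype E] [DecidableEq E]
    (K : Type) [Field K] [Fintype K]
    (G : Multigraph V E) (hG : G.NoIsolated) (A₁ A₂ : Finset E)
    (hcov : A₁ ∪ A₂ = Finset.univ) (hint : (A₁ ∩ A₂).Nonempty) :
    G.reg K ≤ (G.subgraph A₁).reg K + (G.subgraph A₂).reg K := by
  refine Nat.sInf_le ((Multigraph.hilbert_iff K G _).mpr fun x => ?_)
  obtain ⟨f, hf, hfx, hfy⟩ := Multigraph.subgraph_form K G A₁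
    (Multigraph.separates_reg K (G.subgraph A₁)) x
  obtain ⟨g, hg, hgx, hgy⟩ := Multigraph.subgraph_form K G A₂
    (Multigraph.separates_reg K (G.subgraph A₂)) x
  refine ⟨f * g, hf.mul hg, ?_, ?_⟩
  · rw [map_mul]; exact mul_ne_zero hfx hgx
  · intro y hy
    by_contra hne
    rw [map_mul] at hne
    obtain ⟨c, hc⟩ := hfy y (left_ne_zero_of_mul hne)
    obtain ⟨c', hc'⟩ := hgy y (right_ne_zero_of_mul hne)
    obtain ⟨e0, he0⟩ := hint
    rw [Finset.mem_inter] at he0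
    have hcc : (c : K) = c' := mul_right_cancel₀ (Multigraph.point_ne_zero K G x e0)
      ((hc e0 he0.1).trans (hc' e0 he0.2).symm)
    apply hy
    rw [MulAction.orbit_eq_iff]
    refine ⟨c, funext fun e => ?_⟩
    change (c : K) * G.point K x e = _
    have he : e ∈ A₁ ∪ A₂ := hcov ▸ Finset.mem_univ e
    rcases Finset.mem_union.mp he with h | h
    · exact hc e h
    · rw [hcc]; exact hc' e h
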